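/- (Theorem 3: false-negative exponent of the Neyman–Pearson game at equilibrium.) Let A be a nonempty finite set, d : A × A → ℝ nonnegative with d(a,a) = 0 for all a (extended additively to sequences), let P_0, P_1 be strictly positive PMFs on A, Δ_0, Δ_1 ≥ 0 and λ > 0. For each n let Φ*_n(y) = exp( −n · max{ λ − min_{x ∈ A^n : d(x,y) ≤ nΔ_0} D(P̂_x ‖ P_0), 0 } ) and let A*_{Δ_1} be the channel defined below. Then P_FN(Φ*_n, A*_{Δ_1}) > 0 for all sufficiently large n, and the sequence n ↦ −(1/n)·ln P_FN(Φ*_n, A*_{Δ_1}) converges, as n → ∞, to min over PMFs P_Y on A with D̃_{Δ_0}(P_Y, P_0) ≤ λ of D̃_{Δ_1}(P_Y, P_1). -/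

import Mathlib

open scoped Classical
open Finset Filter

noncomputable section

/-- A probability mass function on a finite alphabet, as a real-valued function. -/
def IsPMF {A : Type} [Fintype A] (P : A → ℝ) : Prop :=
  (∀ a, 0 ≤ P a) ∧ ∑ a, P a = 1

/-- Kullback--Leibler divergence `D(Q‖P) = ∑_{a : Q a > 0} Q a · ln (Q a / P a)`. -/
def klDiv {A : Type} [Fintype A] (Q P : A → ℝ) : ℝ :=
  ∑ a, if 0 < Q a then Q a * Real.log (Q a / P a) else 0

/-- First marginal of a joint PMF on `A × A`. -/
def margX {A : Type} [Fintype A] (Q : A × A → ℝ) : A → ℝ := fun a => ∑ b, Q (a, b)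

/-- Second marginal of a joint PMF on `A × A`. -/
def margY {A : Type} [Fintype A] (Q : A × A → ℝ) : A → ℝ := fun b => ∑ a, Q (a, b)

/-- Expected distortion of a joint PMF. -/
def expDist {A : Type} [Fintype A] (d : A → A → ℝ) (Q : A × A → ℝ) : ℝ :=
  ∑ q : A × A, Q q * d q.1 q.2

/-- Generalized divergence `D̃_Δ(P_Y, P)`: minimum of `D(Q_X‖P)` over joint PMFs `Q`
with second marginal `P_Y` and expected distortion at most `Δ`. -/
def Dtilde {A : Type} [Fintype A] (d : A → A → ℝ) (Δ : ℝ) (PY P : A → ℝ) : ℝ :=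
  sInf {v | ∃ Q : A × A → ℝ,
    IsPMF Q ∧ margY Q = PY ∧ expDist d Q ≤ Δ ∧ v = klDiv (margX Q) P}

/-- Earth mover distance between two PMFs. -/
def EMD {A : Type} [Fintype A] (d : A → A → ℝ) (P P' : A → ℝ) : ℝ :=
  sInf {v | ∃ R : A × A → ℝ,
    IsPMF R ∧ margX R = P ∧ margY R = P' ∧ v = expDist d R}

/-- Memoryless (product) probability of a sequence. -/
def seqProb {A : Type} {n : ℕ} (P : A → ℝ) (x : Fin n → A) : ℝ := ∏ i, P (x i)

/-- Additive extension of a per-letter distortion to sequences. -/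
def dSeq {A : Type} {n : ℕ} (d : A → A → ℝ) (x y : Fin n → A) : ℝ := ∑ i, d (x i) (y i)

/-- Empirical PMF (type) of a sequence. -/
def empP {A : Type} [Fintype A] [DecidableEq A] {n : ℕ} (x : Fin n → A) : A → ℝ :=
  fun a => ((univ.filter fun i => x i = a).card : ℝ) / (n : ℝ)

/-- Empirical entropy of a sequence. -/
def empEnt {A : Type} [Fintype A] [DecidableEq A] {n : ℕ} (y : Fin n → A) : ℝ :=
  -∑ a, if 0 < empP y a then empP y a * Real.log (empP y a) else 0

/-- Conditional type class `T(y|x)`. -/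
def condTypeClass {A : Type} [Fintype A] [DecidableEq A] {n : ℕ} (x y : Fin n → A) :
    Finset (Fin n → A) :=
  univ.filter fun y' => ∀ a b : A,
    (univ.filter fun i => x i = a ∧ y' i = b).card
      = (univ.filter fun i => x i = a ∧ y i = b).card

/-- Number of distinct conditional type classes `T(y|x)` arising from `y` with
`dn x y ≤ n·Δ`. -/
def numCondTypes {A : Type} [Fintype A] [DecidableEq A] {n : ℕ}
    (dn : (Fin n → A) → (Fin n → A) → ℝ) (Δ : ℝ) (x : Fin n → A) : ℕ :=
  ((univ.filter fun y => dn x y ≤ (n : ℝ) * Δ).image fun y => condTypeClass x y).card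

/-- The optimal attack channel `A*_Δ(y|x) = c_n(x)/|T(y|x)|` on admissible `y`,
and `0` otherwise; here `c_n(x)` is the reciprocal of the number of admissible
conditional type classes. -/
def Astar {A : Type} [Fintype A] [DecidableEq A] {n : ℕ}
    (dn : (Fin n → A) → (Fin n → A) → ℝ) (Δ : ℝ) (x y : Fin n → A) : ℝ :=
  if dn x y ≤ (n : ℝ) * Δ then
    ((numCondTypes dn Δ x : ℝ))⁻¹ / ((condTypeClass x y).card : ℝ)
  else 0

/-- A channel on `A^n`: `W x y` is the conditional probability of output `y` given input `x`. -/
def IsChannel {A : Type} [Fintype A] {n : ℕ}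
    (W : (Fin n → A) → (Fin n → A) → ℝ) : Prop :=
  (∀ x y, 0 ≤ W x y) ∧ ∀ x, ∑ y, W x y = 1

/-- The class `C_Δ` of admissible channels: those assigning zero probability to any
`y` with `dn x y > n·Δ`. -/
def InC {A : Type} [Fintype A] {n : ℕ}
    (dn : (Fin n → A) → (Fin n → A) → ℝ) (Δ : ℝ)
    (W : (Fin n → A) → (Fin n → A) → ℝ) : Prop :=
  IsChannel W ∧ ∀ x y, (n : ℝ) * Δ < dn x y → W x y = 0

/-- False positive probability: `Φ y` is the probability of deciding `H₁` given `y`. -/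
def PFP {A : Type} [Fintype A] {n : ℕ} (P0 : A → ℝ) (Φ : (Fin n → A) → ℝ)
    (A0 : (Fin n → A) → (Fin n → A) → ℝ) : ℝ :=
  ∑ x, ∑ y, seqProb P0 x * A0 x y * Φ y

/-- False negative probability. -/
def PFN {A : Type} [Fintype A] {n : ℕ} (P1 : A → ℝ) (Φ : (Fin n → A) → ℝ)
    (A1 : (Fin n → A) → (Fin n → A) → ℝ) : ℝ :=
  ∑ x, ∑ y, seqProb P1 x * A1 x y * (1 - Φ y)

/-- Sequence-level generalized divergence
`D̃ⁿ_Δ(y,P) = min_{x : d(x,y) ≤ nΔ} D(P̂_x‖P)`. -/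
def DtildeN {A : Type} [Fintype A] [DecidableEq A] {n : ℕ} (d : A → A → ℝ) (Δ : ℝ)
    (y : Fin n → A) (P : A → ℝ) : ℝ :=
  sInf {v | ∃ x : Fin n → A, dSeq d x y ≤ (n : ℝ) * Δ ∧ v = klDiv (empP x) P}


section helpers

set_option linter.unusedSectionVars false

variable {A : Type} [Fintype A] [DecidableEq A]

def cnt {B : Type} [DecidableEq B] {n : ℕ} (x : Fin n → B) (b : B) : ℕ :=
  (univ.filter fun i => x i = b).card

lemma empP_eq {n : ℕ} (x : Fin n → A) (a : A) : empP x a = (cnt x a : ℝ) / n := rfl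

lemma klDiv_eq (Q P : A → ℝ) (hQ : ∀ a, 0 ≤ Q a) (hP : ∀ a, 0 < P a) :
    klDiv Q P = ∑ a, (Q a * Real.log (Q a) - Q a * Real.log (P a)) := by
  unfold klDiv
  refine Finset.sum_congr rfl fun a _ => ?_
  split_ifs with h
  · rw [Real.log_div h.ne' (hP a).ne']; ring
  · have : Q a = 0 := le_antisymm (not_lt.mp h) (hQ a)
    simp [this]

lemma klDiv_nonneg' (Q P : A → ℝ) (hQ : IsPMF Q) (hP : IsPMF P) (hPp : ∀ a, 0 < P a) :
    0 ≤ klDiv Q P := by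
  have h : ∑ a, (Q a - P a) ≤ klDiv Q P := by
    unfold klDiv
    refine Finset.sum_le_sum fun a _ => ?_
    split_ifs with h
    · have h1 := Real.one_sub_inv_le_log_of_pos (div_pos h (hPp a))
      have h2 := mul_le_mul_of_nonneg_left h1 h.le
      rw [inv_div, mul_sub, mul_one, mul_div_cancel₀ _ h.ne'] at h2
      exact h2
    · have := hPp a
      linarith [not_lt.mp h]
  rw [Finset.sum_sub_distrib, hQ.2, hP.2] at h
  linarith

lemma klDiv_self' (P : A → ℝ) (hPp : ∀ a, 0 < P a) : klDiv P P = 0 := by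
  rw [klDiv_eq P P (fun a => (hPp a).le) hPp]; simp

lemma klDiv_mix (Q R P : A → ℝ) (hQ : ∀ a, 0 ≤ Q a) (hR : ∀ a, 0 ≤ R a) (hP : ∀ a, 0 < P a)
    (t : ℝ) (h0 : 0 ≤ t) (h1 : t ≤ 1) :
    klDiv (fun a => (1 - t) * Q a + t * R a) P ≤ (1 - t) * klDiv Q P + t * klDiv R P := by
  have ht : 0 ≤ 1 - t := by linarith
  rw [klDiv_eq Q P hQ hP, klDiv_eq R P hR hP, klDiv_eq _ P _ hP, Finset.mul_sum, Finset.mul_sum,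
    ← Finset.sum_add_distrib]
  · refine Finset.sum_le_sum fun a _ => ?_
    have := Real.convexOn_mul_log.2 (Set.mem_Ici.2 (hQ a)) (Set.mem_Ici.2 (hR a)) ht h0 (by ring)
    simp only [smul_eq_mul] at this
    linarith
  · intro a
    exact add_nonneg (mul_nonneg ht (hQ a)) (mul_nonneg h0 (hR a))

lemma klDiv_tendsto (Qn : ℕ → A → ℝ) (Q P : A → ℝ) (hQn : ∀ n a, 0 ≤ Qn n a)
    (hP : ∀ a, 0 < P a)
    (h : ∀ a, Tendsto (fun n => Qn n a) atTop (nhds (Q a))) :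
    Tendsto (fun n => klDiv (Qn n) P) atTop (nhds (klDiv Q P)) := by
  have hQ : ∀ a, 0 ≤ Q a := fun a => ge_of_tendsto' (h a) (fun n => hQn n a)
  rw [klDiv_eq Q P hQ hP]
  simp_rw [fun n => klDiv_eq (Qn n) P (hQn n) hP]
  refine tendsto_finsetSum _ fun a _ => ?_
  exact ((Real.continuous_mul_log.tendsto (Q a)).comp (h a)).sub ((h a).mul_const _)

lemma sum_cnt {B : Type} [Fintype B] [DecidableEq B] {n : ℕ} (x : Fin n → B) :
    ∑ b, cnt x b = n := by
  have := Finset.card_eq_sum_card_fiberwise (f := x) (s := univ) (t := univ) (by simp)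
  simpa [cnt] using this.symm

/-- sums over positions are sums over letters -/
lemma sum_pos_eq {B : Type} [Fintype B] [DecidableEq B] {n : ℕ} (x : Fin n → B) (f : B → ℝ) :
    ∑ i, f (x i) = ∑ b, (cnt x b : ℝ) * f b := by
  rw [← Finset.sum_fiberwise (s := univ) (g := x)]
  refine Finset.sum_congr rfl fun b _ => ?_
  rw [Finset.sum_congr rfl (g := fun _ => f b)]
  · simp [cnt]
  · intro i hi; simp at hi; rw [hi]

lemma prod_pos_eq {B : Type} [Fintype B] [DecidableEq B] {n : ℕ} (x : Fin n → B) (f : B → ℝ) :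
    ∏ i, f (x i) = ∏ b, f b ^ (cnt x b) := by
  rw [← Finset.prod_fiberwise (s := univ) (g := x)]
  refine Finset.prod_congr rfl fun b _ => ?_
  rw [Finset.prod_congr rfl (g := fun _ => f b)]
  · simp [cnt]
  · intro i hi; simp at hi; rw [hi]

lemma isPMF_empP {B : Type} [Fintype B] [DecidableEq B] {n : ℕ} (hn : 0 < n) (x : Fin n → B) :
    IsPMF (empP x) := by
  refine ⟨fun a => by unfold empP; positivity, ?_⟩
  simp_rw [empP_eq]
  rw [← Finset.sum_div, ← Nat.cast_sum, sum_cnt]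
  have : (n : ℝ) ≠ 0 := by positivity
  field_simp

lemma cnt_fst {n : ℕ} (z : Fin n → A × A) (a : A) :
    cnt (fun i => (z i).1) a = ∑ b, cnt z (a, b) := by
  unfold cnt
  rw [Finset.card_eq_sum_card_fiberwise (f := fun i => (z i).2) (t := univ) (by simp)]
  refine Finset.sum_congr rfl fun b _ => ?_
  congr 1; ext i; simp [Prod.ext_iff]

lemma cnt_snd {n : ℕ} (z : Fin n → A × A) (b : A) :
    cnt (fun i => (z i).2) b = ∑ a, cnt z (a, b) := by
  unfold cnt
  rw [Finset.card_eq_sum_card_fiberwise (f := fun i => (z i).1) (t := univ) (by simp)]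
  refine Finset.sum_congr rfl fun b _ => ?_
  congr 1; ext i; simp [Prod.ext_iff, and_comm]

lemma margX_empP {n : ℕ} (z : Fin n → A × A) : margX (empP z) = empP (fun i => (z i).1) := by
  ext a
  simp_rw [margX, empP_eq]
  rw [cnt_fst, ← Finset.sum_div]; push_cast; rfl

lemma margY_empP {n : ℕ} (z : Fin n → A × A) : margY (empP z) = empP (fun i => (z i).2) := by
  ext a
  simp_rw [margY, empP_eq]
  rw [cnt_snd, ← Finset.sum_div]; push_cast; rfl

lemma expDist_empP (d : A → A → ℝ) {n : ℕ} (z : Fin n → A × A) :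
    expDist d (empP z) = dSeq d (fun i => (z i).1) (fun i => (z i).2) / n := by
  unfold expDist dSeq
  rw [sum_pos_eq z (fun q => d q.1 q.2), Finset.sum_div]
  refine Finset.sum_congr rfl fun q _ => ?_
  rw [empP_eq]; ring

lemma empP_self_pos {n : ℕ} (x : Fin n → A) (i : Fin n) : 0 < empP x (x i) := by
  have hn : 0 < n := i.pos
  have : 0 < (univ.filter fun j => x j = x i).card := Finset.card_pos.2 ⟨i, by simp⟩
  unfold empP
  positivity

lemma seqProb_eq {n : ℕ} (hn : 0 < n) (P : A → ℝ) (hP : ∀ a, 0 < P a) (x : Fin n → A) :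
    seqProb P x = Real.exp (-(n * klDiv (empP x) P)) * seqProb (empP x) x := by
  have h : (n * klDiv (empP x) P) = ∑ i, Real.log (empP x (x i) / P (x i)) := by
    rw [sum_pos_eq x (fun a => Real.log (empP x a / P a))]
    unfold klDiv
    rw [Finset.mul_sum]
    refine Finset.sum_congr rfl fun a _ => ?_
    have hn' : (n : ℝ) ≠ 0 := by positivity
    split_ifs with h
    · rw [← mul_assoc]; congr 1; rw [empP_eq]; field_simp
    · have h' : empP x a = 0 := le_antisymm (not_lt.mp h) ((isPMF_empP hn x).1 a)
      rw [h']; simp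
  rw [h, ← Finset.sum_neg_distrib, Real.exp_sum]
  unfold seqProb
  rw [← Finset.prod_mul_distrib]
  refine Finset.prod_congr rfl fun i _ => ?_
  have h1 := empP_self_pos x i
  have h2 := hP (x i)
  rw [Real.exp_neg, Real.exp_log (by positivity)]
  field_simp

lemma card_image_cnt_le {B : Type} [Fintype B] [DecidableEq B] {n : ℕ} (s : Finset (Fin n → B)) :
    (s.image (fun x => cnt x)).card ≤ (n + 1) ^ Fintype.card B := by
  have : (s.image (fun x => cnt x)) ⊆ Fintype.piFinset (fun _ : B => Finset.range (n + 1)) := by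
    intro f hf
    obtain ⟨x, _, rfl⟩ := Finset.mem_image.1 hf
    rw [Fintype.mem_piFinset]
    intro b
    rw [Finset.mem_range, Nat.lt_succ_iff]
    exact (Finset.card_le_univ _).trans (by simp)
  refine (Finset.card_le_card this).trans ?_
  simp

lemma sum_seqProb_emp_le {n : ℕ} (hn : 0 < n) :
    ∑ x : Fin n → A, seqProb (empP x) x ≤ ((n : ℝ) + 1) ^ Fintype.card A := by
  have hmaps : ∀ x ∈ (univ : Finset (Fin n → A)),
      cnt x ∈ (univ : Finset (Fin n → A)).image (fun x => cnt x) :=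
    fun x hx => Finset.mem_image_of_mem _ hx
  rw [← Finset.sum_fiberwise_of_maps_to hmaps]
  have hb : ∀ t ∈ (univ : Finset (Fin n → A)).image (fun x => cnt x),
      ∑ x ∈ univ.filter (fun x : Fin n → A => cnt x = t), seqProb (empP x) x ≤ 1 := by
    intro t ht
    obtain ⟨w, _, rfl⟩ := Finset.mem_image.1 ht
    have hw := isPMF_empP hn w
    calc ∑ x ∈ univ.filter (fun x => cnt x = cnt w), seqProb (empP x) x
        = ∑ x ∈ univ.filter (fun x => cnt x = cnt w), seqProb (empP w) x := by
          refine Finset.sum_congr rfl fun x hx => ?_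
          have hx' : cnt x = cnt w := by simpa using hx
          have : empP x = empP w := by
            ext a; rw [empP_eq, empP_eq, hx']
          rw [this]
      _ ≤ ∑ x : Fin n → A, seqProb (empP w) x :=
          Finset.sum_le_sum_of_subset_of_nonneg (Finset.subset_univ _)
            (fun x _ _ => Finset.prod_nonneg fun i _ => hw.1 _)
      _ = (∑ a, empP w a) ^ n := by
          unfold seqProb
          rw [Fintype.sum_pow]
      _ = 1 := by rw [hw.2, one_pow]
  refine (Finset.sum_le_sum hb).trans ?_
  rw [Finset.sum_const, nsmul_eq_mul, mul_one]
  exact_mod_cast card_image_cnt_le _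

lemma Dtilde_bdd (d : A → A → ℝ) (Δ : ℝ) (PY P : A → ℝ) (hP : IsPMF P) (hPp : ∀ a, 0 < P a) :
    ∀ v ∈ {v | ∃ Q : A × A → ℝ,
    IsPMF Q ∧ margY Q = PY ∧ expDist d Q ≤ Δ ∧ v = klDiv (margX Q) P}, 0 ≤ v := by
  rintro v ⟨Q, hQ, -, -, rfl⟩
  refine klDiv_nonneg' _ _ ⟨fun a => Finset.sum_nonneg fun b _ => hQ.1 _, ?_⟩ hP hPp
  rw [← hQ.2, Fintype.sum_prod_type]; rfl

lemma Dtilde_nonneg (d : A → A → ℝ) (Δ : ℝ) (PY P : A → ℝ) (hP : IsPMF P)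
    (hPp : ∀ a, 0 < P a) : 0 ≤ Dtilde d Δ PY P :=
  Real.sInf_nonneg (Dtilde_bdd d Δ PY P hP hPp)

lemma Dtilde_empP_le (d : A → A → ℝ) (Δ : ℝ) (P : A → ℝ) (hP : IsPMF P) (hPp : ∀ a, 0 < P a)
    {n : ℕ} (hn : 0 < n) (x y : Fin n → A) (h : dSeq d x y ≤ n * Δ) :
    Dtilde d Δ (empP y) P ≤ klDiv (empP x) P := by
  refine csInf_le ⟨0, fun v hv => Dtilde_bdd d Δ _ P hP hPp v hv⟩
    ⟨empP (fun i => (x i, y i)), isPMF_empP hn _, margY_empP _, ?_, ?_⟩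
  · rw [expDist_empP]
    have : (0 : ℝ) < n := by positivity
    rw [div_le_iff₀ this, mul_comm]; exact h
  · rw [margX_empP]

lemma mem_condTypeClass_self {n : ℕ} (x y : Fin n → A) : y ∈ condTypeClass x y := by
  simp [condTypeClass]

lemma Astar_nonneg {n : ℕ} (dn : (Fin n → A) → (Fin n → A) → ℝ) (Δ : ℝ) (x y : Fin n → A) :
    0 ≤ Astar dn Δ x y := by
  unfold Astar; split_ifs <;> positivity

lemma sum_Astar_le {n : ℕ} (dn : (Fin n → A) → (Fin n → A) → ℝ) (Δ : ℝ) (x : Fin n → A) :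
    ∑ y, Astar dn Δ x y ≤ 1 := by
  unfold Astar
  rw [← Finset.sum_filter]
  set S := univ.filter fun y => dn x y ≤ (n : ℝ) * Δ with hS
  have hmaps : ∀ y ∈ S, condTypeClass x y ∈ S.image (fun y => condTypeClass x y) :=
    fun y hy => Finset.mem_image_of_mem _ hy
  rw [← Finset.sum_fiberwise_of_maps_to hmaps]
  have hb : ∀ C ∈ S.image (fun y => condTypeClass x y),
      ∑ y ∈ S.filter (fun y => condTypeClass x y = C),
        ((numCondTypes dn Δ x : ℝ))⁻¹ / ((condTypeClass x y).card : ℝ)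
        ≤ ((numCondTypes dn Δ x : ℝ))⁻¹ := by
    intro C hC
    rw [Finset.sum_congr rfl (g := fun _ => ((numCondTypes dn Δ x : ℝ))⁻¹ / (C.card : ℝ))]
    · rw [Finset.sum_const, nsmul_eq_mul]
      have hsub : S.filter (fun y => condTypeClass x y = C) ⊆ C := by
        intro y hy
        rw [← (Finset.mem_filter.1 hy).2]
        exact mem_condTypeClass_self x y
      have hcard : ((S.filter (fun y => condTypeClass x y = C)).card : ℝ) ≤ C.card := by
        exact_mod_cast Finset.card_le_card hsub
      have h0 : (0 : ℝ) ≤ ((numCondTypes dn Δ x : ℝ))⁻¹ := by positivity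
      rcases Nat.eq_zero_or_pos C.card with hc | hc
      · simp [hc]
      · have : (0 : ℝ) < C.card := by exact_mod_cast hc
        rw [mul_div_assoc', div_le_iff₀ this, mul_comm]
        exact mul_le_mul_of_nonneg_left hcard h0
    · intro y hy
      rw [(Finset.mem_filter.1 hy).2]
  refine (Finset.sum_le_sum hb).trans ?_
  rw [Finset.sum_const, nsmul_eq_mul]
  change (numCondTypes dn Δ x : ℝ) * _ ≤ 1
  exact mul_inv_le_one

lemma DtildeN_bdd (d : A → A → ℝ) (Δ : ℝ) {n : ℕ} (hn : 0 < n) (y : Fin n → A) (P : A → ℝ)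
    (hP : IsPMF P) (hPp : ∀ a, 0 < P a) :
    BddBelow {v | ∃ x : Fin n → A, dSeq d x y ≤ (n : ℝ) * Δ ∧ v = klDiv (empP x) P} := by
  refine ⟨0, ?_⟩
  rintro v ⟨x, -, rfl⟩
  exact klDiv_nonneg' _ _ (isPMF_empP hn x) hP hPp

lemma dSeq_self (d : A → A → ℝ) (hdrefl : ∀ a, d a a = 0) {n : ℕ} (y : Fin n → A) :
    dSeq d y y = 0 := by
  simp [dSeq, hdrefl]

lemma Dtilde_le_of_DtildeN_lt (d : A → A → ℝ) (hdrefl : ∀ a, d a a = 0) (Δ : ℝ) (hΔ : 0 ≤ Δ)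
    {n : ℕ} (hn : 0 < n) (y : Fin n → A) (P : A → ℝ)
    (hP : IsPMF P) (hPp : ∀ a, 0 < P a) (l : ℝ) (h : DtildeN d Δ y P < l) :
    Dtilde d Δ (empP y) P ≤ l := by
  unfold DtildeN at h
  have hne : {v | ∃ x : Fin n → A, dSeq d x y ≤ (n : ℝ) * Δ ∧ v = klDiv (empP x) P}.Nonempty :=
    ⟨klDiv (empP y) P, y, by rw [dSeq_self d hdrefl]; positivity, rfl⟩
  obtain ⟨v, ⟨x, hx, rfl⟩, hv⟩ := exists_lt_of_csInf_lt hne h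
  exact (Dtilde_empP_le d Δ P hP hPp hn x y hx).trans hv.le

/-- The limiting exponent. -/
def expo (d : A → A → ℝ) (P0 P1 : A → ℝ) (Δ0 Δ1 lam : ℝ) : ℝ :=
  sInf {v | ∃ PY : A → ℝ, IsPMF PY ∧ Dtilde d Δ0 PY P0 ≤ lam ∧ v = Dtilde d Δ1 PY P1}

/-- The equilibrium rule. -/
def rule (d : A → A → ℝ) (P0 : A → ℝ) (Δ0 lam : ℝ) (n : ℕ) : (Fin n → A) → ℝ :=
  fun y : Fin n → A => Real.exp (-(n : ℝ) * max (lam - DtildeN d Δ0 y P0) 0)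

lemma rule_le_one (d : A → A → ℝ) (P0 : A → ℝ) (Δ0 lam : ℝ) (n : ℕ) (y : Fin n → A) :
    rule d P0 Δ0 lam n y ≤ 1 := by
  unfold rule
  rw [Real.exp_le_one_iff]
  have h1 : 0 ≤ max (lam - DtildeN d Δ0 y P0) 0 := le_max_right _ _
  have h2 : (0 : ℝ) ≤ n := by positivity
  nlinarith [mul_nonneg h2 h1]

lemma seqProb_nonneg {n : ℕ} (P : A → ℝ) (hP : ∀ a, 0 ≤ P a) (x : Fin n → A) :
    0 ≤ seqProb P x := Finset.prod_nonneg fun _ _ => hP _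

lemma PFN_le (d : A → A → ℝ) (hdrefl : ∀ a, d a a = 0)
    (P0 P1 : A → ℝ) (hP0 : IsPMF P0) (hP1 : IsPMF P1)
    (hP0pos : ∀ a, 0 < P0 a) (hP1pos : ∀ a, 0 < P1 a)
    (Δ0 Δ1 lam : ℝ) (hΔ0 : 0 ≤ Δ0) {n : ℕ} (hn : 0 < n) :
    PFN P1 (rule d P0 Δ0 lam n) (Astar (dSeq d) Δ1) ≤
      ((n : ℝ) + 1) ^ Fintype.card A * Real.exp (-(n * expo d P0 P1 Δ0 Δ1 lam)) := by
  set E := expo d P0 P1 Δ0 Δ1 lam with hE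
  have key : ∀ x : Fin n → A,
      ∑ y, seqProb P1 x * Astar (dSeq d) Δ1 x y * (1 - rule d P0 Δ0 lam n y) ≤
        Real.exp (-(n * E)) * seqProb (empP x) x := by
    intro x
    have hemp : 0 ≤ seqProb (empP x) x := seqProb_nonneg _ (isPMF_empP hn x).1 x
    have hsp : 0 ≤ seqProb P1 x := seqProb_nonneg _ hP1.1 x
    by_cases hx : E ≤ klDiv (empP x) P1
    · calc ∑ y, seqProb P1 x * Astar (dSeq d) Δ1 x y * (1 - rule d P0 Δ0 lam n y)
          ≤ ∑ y, seqProb P1 x * Astar (dSeq d) Δ1 x y := by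
            refine Finset.sum_le_sum fun y _ => ?_
            refine mul_le_of_le_one_right (mul_nonneg hsp (Astar_nonneg _ _ _ _)) ?_
            have : 0 < rule d P0 Δ0 lam n y := Real.exp_pos _
            linarith
        _ = seqProb P1 x * ∑ y, Astar (dSeq d) Δ1 x y := by rw [Finset.mul_sum]
        _ ≤ seqProb P1 x := mul_le_of_le_one_right hsp (sum_Astar_le _ _ _)
        _ = Real.exp (-(n * klDiv (empP x) P1)) * seqProb (empP x) x := seqProb_eq hn P1 hP1pos x
        _ ≤ _ := by gcongr
    · refine le_trans (Finset.sum_nonpos fun y _ => ?_) (mul_nonneg (Real.exp_pos _).le hemp)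
      by_cases hxy : dSeq d x y ≤ n * Δ1
      · by_cases hy : DtildeN d Δ0 y P0 < lam
        · exfalso
          apply hx
          have h1 := Dtilde_le_of_DtildeN_lt d hdrefl Δ0 hΔ0 hn y P0 hP0 hP0pos lam hy
          have h2 := Dtilde_empP_le d Δ1 P1 hP1 hP1pos hn x y hxy
          refine le_trans (csInf_le ⟨0, ?_⟩ ⟨empP y, isPMF_empP hn y, h1, rfl⟩) h2
          rintro v ⟨PY, -, -, rfl⟩
          exact Dtilde_nonneg d Δ1 PY P1 hP1 hP1pos
        · have : rule d P0 Δ0 lam n y = 1 := by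
            unfold rule
            rw [max_eq_right (by linarith)]; simp
          rw [this]; simp
      · have : Astar (dSeq d) Δ1 x y = 0 := by unfold Astar; rw [if_neg hxy]
        rw [this]; simp
  unfold PFN
  refine (Finset.sum_le_sum fun x _ => key x).trans ?_
  rw [← Finset.mul_sum, mul_comm]
  exact mul_le_mul_of_nonneg_right (sum_seqProb_emp_le hn) (Real.exp_pos _).le

lemma exists_perm_of_cnt_eq {B : Type} [Fintype B] [DecidableEq B] {n : ℕ} (f g : Fin n → B)
    (h : cnt f = cnt g) : ∃ σ : Equiv.Perm (Fin n), ∀ i, g (σ i) = f i := by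
  have e : ∀ c, Nonempty ({a // f a = c} ≃ {b // g b = c}) := by
    intro c
    refine ⟨Fintype.equivOfCardEq ?_⟩
    have := congrFun h c
    simpa [cnt, Fintype.card_subtype] using this
  exact ⟨Equiv.ofFiberEquiv (fun c => (e c).some), fun i => Equiv.ofFiberEquiv_map _ i⟩

lemma cnt_perm {B : Type} [Fintype B] [DecidableEq B] {n : ℕ} (f : Fin n → B)
    (σ : Equiv.Perm (Fin n)) : cnt (fun i => f (σ i)) = cnt f := by
  ext b
  unfold cnt
  refine Finset.card_bij (fun i _ => σ i) ?_ ?_ ?_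
  · intro i hi; simpa using hi
  · intro i _ j _ hij; exact σ.injective hij
  · intro j hj
    exact ⟨σ.symm j, by simpa using hj, by simp⟩

lemma dSeq_perm (d : A → A → ℝ) {n : ℕ} (x y : Fin n → A) (σ : Equiv.Perm (Fin n)) :
    dSeq d (fun i => x (σ i)) (fun i => y (σ i)) = dSeq d x y :=
  Equiv.sum_comp σ (fun i => d (x i) (y i))

lemma empP_congr {n : ℕ} {x y : Fin n → A} (h : cnt x = cnt y) : empP x = empP y := by
  ext a; rw [empP_eq, empP_eq, h]

lemma DtildeN_le (d : A → A → ℝ) (Δ : ℝ) {n : ℕ} (hn : 0 < n) (x y y' : Fin n → A) (P : A → ℝ)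
    (hP : IsPMF P) (hPp : ∀ a, 0 < P a) (hxy : dSeq d x y ≤ n * Δ) (h : cnt y' = cnt y) :
    DtildeN d Δ y' P ≤ klDiv (empP x) P := by
  obtain ⟨σ, hσ⟩ := exists_perm_of_cnt_eq y' y h
  refine csInf_le (DtildeN_bdd d Δ hn y' P hP hPp) ⟨fun i => x (σ i), ?_, ?_⟩
  · have : y' = fun i => y (σ i) := by ext i; rw [hσ]
    rw [this, dSeq_perm]; exact hxy
  · rw [empP_congr (cnt_perm x σ)]

lemma factorial_upper (k : ℕ) :
    ((k.factorial : ℕ) : ℝ) * Real.exp k ≤ Real.exp 1 * (k + 1) * (k : ℝ) ^ k := by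
  have aux : ∀ k : ℕ, (((k + 1).factorial : ℕ) : ℝ) * Real.exp ((k + 1 : ℕ) : ℝ) ≤
      Real.exp 1 * ((k + 1 : ℕ) : ℝ) * ((k + 1 : ℕ) : ℝ) ^ (k + 1) := by
    intro k
    induction k with
    | zero => simp
    | succ k ih =>
      set m : ℝ := ((k + 1 : ℕ) : ℝ) with hm
      have hmpos : 0 < m := by rw [hm]; positivity
      have hm1 : ((k + 1 + 1 : ℕ) : ℝ) = m + 1 := by rw [hm]; push_cast; ring
      rw [hm1, Nat.factorial_succ, Nat.cast_mul, hm1, Real.exp_add]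
      have h1 : Real.exp 1 * m ^ (k + 1 + 1) ≤ (m + 1) ^ (k + 1 + 1) := by
        have hl := Real.one_sub_inv_le_log_of_pos (show 0 < (m + 1) / m by positivity)
        have h2 : 1 ≤ ((k + 1 + 1 : ℕ) : ℝ) * Real.log ((m + 1) / m) := by
          rw [hm1]
          have : 1 - ((m + 1) / m)⁻¹ = 1 / (m + 1) := by field_simp; ring
          rw [this, div_le_iff₀ (by positivity)] at hl
          linarith
        rw [← Real.log_pow] at h2
        have h3 := Real.exp_le_exp.2 h2
        rw [Real.exp_log (by positivity), div_pow, le_div_iff₀ (by positivity)] at h3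
        exact h3
      calc (m + 1) * ((k + 1).factorial : ℝ) * (Real.exp m * Real.exp 1)
          = ((m + 1) * Real.exp 1) * (((k + 1).factorial : ℝ) * Real.exp m) := by ring
        _ ≤ ((m + 1) * Real.exp 1) * (Real.exp 1 * m * m ^ (k + 1)) := by gcongr
        _ = Real.exp 1 * (m + 1) * (Real.exp 1 * m ^ (k + 1 + 1)) := by ring
        _ ≤ Real.exp 1 * (m + 1) * (m + 1) ^ (k + 1 + 1) := by gcongr
  cases k with
  | zero => simp
  | succ k =>
    refine (aux k).trans ?_
    gcongr
    linarith

lemma factorial_lower (n : ℕ) : (n : ℝ) ^ n ≤ ((n.factorial : ℕ) : ℝ) * Real.exp n := by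
  have h := Real.pow_div_factorial_le_exp (n : ℝ) (by positivity) n
  rw [div_le_iff₀ (by positivity)] at h
  linarith

/-- permutation orbit of a sequence -/
def orb {n : ℕ} (x : Fin n → A) : Finset (Fin n → A) :=
  (univ : Finset (Equiv.Perm (Fin n))).image (fun σ => fun i => x (σ i))

lemma orb_card {n : ℕ} (x : Fin n → A) :
    n.factorial ≤ (∏ a, (cnt x a).factorial) * (orb x).card := by
  have h := Finset.card_le_mul_card_image (f := fun σ : Equiv.Perm (Fin n) => fun i => x (σ i))
    (univ : Finset (Equiv.Perm (Fin n))) (∏ a, (cnt x a).factorial) ?_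
  · simpa [Fintype.card_perm, orb] using h
  · intro w hw
    obtain ⟨τ, -, rfl⟩ := Finset.mem_image.1 hw
    have h1 := DomMulAct.stabilizer_card x
    have h2 : ∏ a, (cnt x a).factorial =
        (univ.filter fun g : Equiv.Perm (Fin n) => x ∘ g = x).card := by
      rw [Fintype.card_subtype] at h1
      simp_rw [Fintype.card_subtype] at h1
      exact h1.symm
    rw [h2]
    refine Finset.card_le_card_of_injOn (fun σ => σ * τ⁻¹) ?_ ?_
    · intro σ hσ
      have hσ' : (fun i => x (σ i)) = fun i => x (τ i) := by simpa using hσ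
      simp only [Finset.coe_filter, Finset.mem_univ, true_and, Set.mem_ofPred_eq]
      ext i
      have := congrFun hσ' (τ⁻¹ i)
      simpa using this
    · intro σ _ σ' _ h
      exact mul_right_cancel h

lemma cnt_le {B : Type} [DecidableEq B] {n : ℕ} (x : Fin n → B) (b : B) : cnt x b ≤ n :=
  (Finset.card_le_univ _).trans (by simp)

lemma orb_prob {n : ℕ} (hn : 0 < n) (x : Fin n → A) :
    1 ≤ (Real.exp 1 * (n + 1)) ^ Fintype.card A * ((orb x).card * seqProb (empP x) x) := by
  have hs : seqProb (empP x) x = (∏ a, (cnt x a : ℝ) ^ cnt x a) / (n : ℝ) ^ n := by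
    unfold seqProb
    rw [prod_pos_eq x (empP x)]
    simp_rw [empP_eq, div_pow]
    rw [Finset.prod_div_distrib, Finset.prod_pow_eq_pow_sum, sum_cnt]
  have hn' : (0 : ℝ) < (n : ℝ) ^ n := by positivity
  have h1 : ((n.factorial : ℕ) : ℝ) ≤ (∏ a, ((cnt x a).factorial : ℝ)) * (orb x).card := by
    exact_mod_cast orb_card x
  have hexp : Real.exp n = ∏ a, Real.exp (cnt x a) := by
    rw [← Real.exp_sum, ← Nat.cast_sum, sum_cnt]
  have h2 : (∏ a, ((cnt x a).factorial : ℝ)) * Real.exp n ≤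
      (Real.exp 1 * (n + 1)) ^ Fintype.card A * ∏ a, (cnt x a : ℝ) ^ cnt x a := by
    rw [hexp, ← Finset.prod_mul_distrib]
    have : (Real.exp 1 * ((n : ℝ) + 1)) ^ Fintype.card A = ∏ _a : A, (Real.exp 1 * ((n : ℝ) + 1)) := by
      simp
    rw [this, ← Finset.prod_mul_distrib]
    refine Finset.prod_le_prod (fun a _ => by positivity) fun a _ => ?_
    refine (factorial_upper _).trans ?_
    have : (cnt x a : ℝ) ≤ n := by exact_mod_cast cnt_le x a
    gcongr
  rw [hs, mul_div_assoc', mul_div_assoc', le_div_iff₀ hn', one_mul]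
  calc (n : ℝ) ^ n ≤ ((n.factorial : ℕ) : ℝ) * Real.exp n := factorial_lower n
    _ ≤ ((∏ a, ((cnt x a).factorial : ℝ)) * (orb x).card) * Real.exp n := by gcongr
    _ = (orb x).card * ((∏ a, ((cnt x a).factorial : ℝ)) * Real.exp n) := by ring
    _ ≤ (orb x).card * ((Real.exp 1 * (n + 1)) ^ Fintype.card A * ∏ a, (cnt x a : ℝ) ^ cnt x a) := by
        gcongr
    _ = _ := by ring

lemma joint_card {n : ℕ} (x y : Fin n → A) (a b : A) :
    (univ.filter fun i => x i = a ∧ y i = b).card = cnt (fun i => (x i, y i)) (a, b) := by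
  unfold cnt; simp [Prod.ext_iff]

lemma mem_condTypeClass_iff {n : ℕ} (x y y' : Fin n → A) :
    y' ∈ condTypeClass x y ↔ cnt (fun i => (x i, y' i)) = cnt (fun i => (x i, y i)) := by
  unfold condTypeClass
  simp only [Finset.mem_filter, Finset.mem_univ, true_and, joint_card]
  constructor
  · intro h; ext ⟨a, b⟩; exact h a b
  · intro h a b; rw [h]

lemma numCondTypes_le {n : ℕ} (dn : (Fin n → A) → (Fin n → A) → ℝ) (Δ : ℝ) (x : Fin n → A) :
    numCondTypes dn Δ x ≤ (n + 1) ^ Fintype.card (A × A) := by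
  unfold numCondTypes
  set S := univ.filter fun y => dn x y ≤ (n : ℝ) * Δ
  have h : S.image (fun y => condTypeClass x y) =
      ((S.image (fun y => fun i => (x i, y i))).image (fun z => cnt z)).image
        (fun k => univ.filter fun y' : Fin n → A => cnt (fun i => (x i, y' i)) = k) := by
    rw [Finset.image_image, Finset.image_image]
    refine Finset.image_congr fun y _ => ?_
    ext y'
    simp [mem_condTypeClass_iff]
  rw [h]
  exact Finset.card_image_le.trans (card_image_cnt_le _)

lemma PFN_ge (d : A → A → ℝ)
    (P0 P1 : A → ℝ) (hP0 : IsPMF P0) (hP1 : IsPMF P1)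
    (hP0pos : ∀ a, 0 < P0 a) (hP1pos : ∀ a, 0 < P1 a)
    (Δ0 Δ1 lam δ : ℝ) {n : ℕ} (hn : 0 < n) (hδ : 1 ≤ n * δ)
    (x0 y0 x1 y1 : Fin n → A) (hy : cnt y1 = cnt y0)
    (h0 : dSeq d x0 y0 ≤ n * Δ0) (h1 : dSeq d x1 y1 ≤ n * Δ1)
    (hk : klDiv (empP x0) P0 ≤ lam - δ) :
    (1 / 2) * (((n : ℝ) + 1) ^ Fintype.card (A × A))⁻¹ *
      (((Real.exp 1 * (n + 1)) ^ Fintype.card A)⁻¹ * Real.exp (-(n * klDiv (empP x1) P1))) ≤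
    PFN P1 (rule d P0 Δ0 lam n) (Astar (dSeq d) Δ1) := by
  have hn0 : (0 : ℝ) < n := by positivity
  set K : ℝ := (((n : ℝ) + 1) ^ Fintype.card (A × A))⁻¹ with hK
  have hKpos : 0 < K := by rw [hK]; positivity
  have hterm : ∀ x y : Fin n → A, 0 ≤ seqProb P1 x * Astar (dSeq d) Δ1 x y *
      (1 - rule d P0 Δ0 lam n y) := fun x y =>
    mul_nonneg (mul_nonneg (seqProb_nonneg _ hP1.1 x) (Astar_nonneg _ _ _ _))
      (sub_nonneg.2 (rule_le_one d P0 Δ0 lam n y))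
  have hrule : ∀ y : Fin n → A, cnt y = cnt y0 → 1 / 2 ≤ 1 - rule d P0 Δ0 lam n y := by
    intro y hcy
    have h := DtildeN_le d Δ0 hn x0 y0 y P0 hP0 hP0pos h0 hcy
    have h2 : rule d P0 Δ0 lam n y ≤ Real.exp (-1) := by
      unfold rule
      refine Real.exp_le_exp.2 ?_
      have : δ ≤ max (lam - DtildeN d Δ0 y P0) 0 := le_max_of_le_left (by linarith)
      have := mul_le_mul_of_nonneg_left this hn0.le
      linarith
    have h3 : Real.exp (-1) ≤ 1 / 2 := by
      rw [Real.exp_neg, one_div]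
      refine inv_anti₀ (by norm_num) ?_
      have := Real.add_one_le_exp (1 : ℝ)
      linarith
    linarith
  have key : ∀ x ∈ orb x1, (1 / 2) * K * seqProb P1 x1 ≤
      ∑ y, seqProb P1 x * Astar (dSeq d) Δ1 x y * (1 - rule d P0 Δ0 lam n y) := by
    intro x hx
    obtain ⟨σ, -, rfl⟩ := Finset.mem_image.1 hx
    set x : Fin n → A := fun i => x1 (σ i) with hxdef
    set w : Fin n → A := fun i => y1 (σ i) with hwdef
    have hsx : seqProb P1 x = seqProb P1 x1 := Equiv.prod_comp σ (fun i => P1 (x1 i))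
    have hdw : dSeq d x w = dSeq d x1 y1 := dSeq_perm d x1 y1 σ
    have hsp := seqProb_nonneg P1 hP1.1 x1
    set N : ℝ := (numCondTypes (dSeq d) Δ1 x : ℝ) with hN
    have hNpos : 0 < N := by
      rw [hN]
      have : 0 < numCondTypes (dSeq d) Δ1 x := by
        unfold numCondTypes
        refine Finset.card_pos.2 (Finset.Nonempty.image ⟨w, ?_⟩ _)
        simp only [Finset.mem_filter, Finset.mem_univ, true_and]
        rw [hdw]; exact h1
      exact_mod_cast this
    have hNle : K ≤ N⁻¹ := by
      refine inv_anti₀ hNpos ?_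
      rw [hN]
      exact_mod_cast numCondTypes_le (dSeq d) Δ1 x
    have hTpos : (0 : ℝ) < (condTypeClass x w).card := by
      exact_mod_cast Finset.card_pos.2 ⟨w, mem_condTypeClass_self x w⟩
    calc (1 / 2) * K * seqProb P1 x1 ≤ (1 / 2) * N⁻¹ * seqProb P1 x1 := by gcongr
      _ = ∑ y ∈ condTypeClass x w, seqProb P1 x1 * (N⁻¹ / (condTypeClass x w).card) * (1 / 2) := by
          rw [Finset.sum_const, nsmul_eq_mul]; field_simp
      _ ≤ ∑ y ∈ condTypeClass x w,
            seqProb P1 x * Astar (dSeq d) Δ1 x y * (1 - rule d P0 Δ0 lam n y) := by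
          refine Finset.sum_le_sum fun y hy' => ?_
          rw [mem_condTypeClass_iff] at hy'
          have hT : condTypeClass x y = condTypeClass x w := by
            ext u; rw [mem_condTypeClass_iff, mem_condTypeClass_iff, hy']
          have hdy : dSeq d x y = dSeq d x w := by
            unfold dSeq
            rw [sum_pos_eq (fun i => (x i, y i)) (fun q => d q.1 q.2),
              sum_pos_eq (fun i => (x i, w i)) (fun q => d q.1 q.2), hy']
          have hcy : cnt y = cnt y0 := by
            rw [← hy, ← cnt_perm y1 σ]
            ext b
            have e1 := cnt_snd (fun i => (x i, y i)) b
            have e2 := cnt_snd (fun i => (x i, w i)) b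
            rw [hy', ← e2] at e1
            exact e1
          have hA : Astar (dSeq d) Δ1 x y = N⁻¹ / (condTypeClass x w).card := by
            unfold Astar
            rw [if_pos (by rw [hdy, hdw]; exact h1), hT]
          rw [hA, hsx]
          refine mul_le_mul_of_nonneg_left (hrule y hcy) ?_
          positivity
      _ ≤ _ := Finset.sum_le_sum_of_subset_of_nonneg (Finset.subset_univ _)
            (fun y _ _ => hterm x y)
  calc (1 / 2) * K *
      (((Real.exp 1 * (n + 1)) ^ Fintype.card A)⁻¹ * Real.exp (-(n * klDiv (empP x1) P1)))
      ≤ (1 / 2) * K * ((orb x1).card * seqProb P1 x1) := by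
        refine mul_le_mul_of_nonneg_left ?_ (by positivity)
        rw [seqProb_eq hn P1 hP1pos x1]
        have h := orb_prob hn x1
        have hpos : 0 < (Real.exp 1 * ((n : ℝ) + 1)) ^ Fintype.card A := by positivity
        rw [inv_mul_le_iff₀ hpos]
        have := mul_le_mul_of_nonneg_left h (Real.exp_pos (-(n * klDiv (empP x1) P1))).le
        linarith
    _ = ∑ x ∈ orb x1, (1 / 2) * K * seqProb P1 x1 := by
        rw [Finset.sum_const, nsmul_eq_mul]; ring
    _ ≤ ∑ x ∈ orb x1, ∑ y, seqProb P1 x * Astar (dSeq d) Δ1 x y *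
          (1 - rule d P0 Δ0 lam n y) := Finset.sum_le_sum key
    _ ≤ _ := Finset.sum_le_sum_of_subset_of_nonneg (Finset.subset_univ _)
            (fun x _ _ => Finset.sum_nonneg fun y _ => hterm x y)

lemma exists_seq_of_counts {B : Type} [Fintype B] [DecidableEq B] {n : ℕ} (N : B → ℕ)
    (h : ∑ b, N b = n) : ∃ z : Fin n → B, cnt z = N := by
  have e : Nonempty (Fin n ≃ Σ b, Fin (N b)) := by
    refine ⟨Fintype.equivOfCardEq ?_⟩
    simp [h]
  obtain ⟨e⟩ := e
  refine ⟨fun i => (e i).1, ?_⟩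
  ext b
  unfold cnt
  have hinj : Function.Injective (fun j : Fin (N b) => e.symm ⟨b, j⟩) := fun j j' hj => by
    simpa using hj
  have h1 : (univ.filter fun i => (e i).1 = b)
      = (univ : Finset (Fin (N b))).image (fun j => e.symm ⟨b, j⟩) := by
    ext i
    simp only [Finset.mem_filter, Finset.mem_univ, true_and, Finset.mem_image]
    constructor
    · rintro rfl
      exact ⟨(e i).2, by simp⟩
    · rintro ⟨j, rfl⟩
      simp
  rw [h1, Finset.card_image_of_injective _ hinj]; simp

/-- rounded second marginal -/
def NY (PY : A → ℝ) (b0 : A) (n : ℕ) (b : A) : ℕ :=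
  ⌊(n : ℝ) * PY b⌋₊ + if b = b0 then n - ∑ b', ⌊(n : ℝ) * PY b'⌋₊ else 0

lemma sum_floor_le {ι : Type} (s : Finset ι) (f : ι → ℝ) (hf : ∀ i ∈ s, 0 ≤ f i) :
    ∑ i ∈ s, ⌊f i⌋₊ ≤ ⌊∑ i ∈ s, f i⌋₊ := by
  refine Nat.le_floor ?_
  push_cast
  exact Finset.sum_le_sum fun i hi => Nat.floor_le (hf i hi)

lemma sum_floor_PMF_le (PY : A → ℝ) (h : IsPMF PY) (n : ℕ) :
    ∑ b', ⌊(n : ℝ) * PY b'⌋₊ ≤ n := by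
  refine (sum_floor_le _ _ fun b _ => mul_nonneg (by positivity) (h.1 b)).trans ?_
  rw [← Finset.mul_sum, h.2]; simp

lemma sum_NY (PY : A → ℝ) (h : IsPMF PY) (b0 : A) (n : ℕ) : ∑ b, NY PY b0 n b = n := by
  unfold NY
  rw [Finset.sum_add_distrib]
  have := sum_floor_PMF_le PY h n
  simp
  omega

lemma tendsto_floor (q : ℝ) (hq : 0 ≤ q) :
    Tendsto (fun n : ℕ => (⌊(n : ℝ) * q⌋₊ : ℝ) / n) atTop (nhds q) := by
  have := (tendsto_nat_floor_mul_div_atTop hq).comp (tendsto_natCast_atTop_atTop (R := ℝ))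
  refine this.congr fun n => ?_
  simp [mul_comm]

lemma tendsto_NY (PY : A → ℝ) (h : IsPMF PY) (b0 b : A) :
    Tendsto (fun n : ℕ => (NY PY b0 n b : ℝ) / n) atTop (nhds (PY b)) := by
  have h1 := tendsto_floor (PY b) (h.1 b)
  by_cases hb : b = b0
  · have h2 : Tendsto (fun n : ℕ => (⌊(n : ℝ) * PY b⌋₊ : ℝ) / n +
        (1 - ∑ b', (⌊(n : ℝ) * PY b'⌋₊ : ℝ) / n)) atTop (nhds (PY b + (1 - ∑ b', PY b'))) :=
      h1.add (tendsto_const_nhds.sub (tendsto_finsetSum _ fun b' _ => tendsto_floor _ (h.1 b')))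
    rw [h.2, sub_self, add_zero] at h2
    refine h2.congr' ?_
    filter_upwards [eventually_gt_atTop 0] with n hn
    have hn' : (n : ℝ) ≠ 0 := by positivity
    unfold NY
    rw [if_pos hb, Nat.cast_add, Nat.cast_sub (sum_floor_PMF_le PY h n), ← Finset.sum_div]
    push_cast
    field_simp
  · refine h1.congr fun n => ?_
    unfold NY
    rw [if_neg hb]; simp

/-- rounded joint counts -/
def NJ (Q : A × A → ℝ) (b0 : A) (n : ℕ) (q : A × A) : ℕ :=
  if q.1 = q.2 then NY (margY Q) b0 n q.2 - ∑ a ∈ univ.erase q.2, ⌊(n : ℝ) * Q (a, q.2)⌋₊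
  else ⌊(n : ℝ) * Q q⌋₊

lemma isPMF_margY (Q : A × A → ℝ) (hQ : IsPMF Q) : IsPMF (margY Q) := by
  refine ⟨fun b => Finset.sum_nonneg fun a _ => hQ.1 _, ?_⟩
  rw [← hQ.2, Fintype.sum_prod_type_right]; rfl

lemma NJ_aux (Q : A × A → ℝ) (hQ : IsPMF Q) (b0 : A) (n : ℕ) (b : A) :
    ∑ a ∈ univ.erase b, ⌊(n : ℝ) * Q (a, b)⌋₊ ≤ NY (margY Q) b0 n b := by
  have hnn : ∀ a, 0 ≤ (n : ℝ) * Q (a, b) := fun a => mul_nonneg (by positivity) (hQ.1 _)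
  refine (sum_floor_le _ _ fun a _ => hnn a).trans ?_
  refine le_trans ?_ (Nat.le_add_right _ _)
  refine Nat.floor_le_floor ?_
  unfold margY
  rw [Finset.mul_sum]
  exact Finset.sum_le_sum_of_subset_of_nonneg (Finset.subset_univ _) fun a _ _ => hnn a

lemma sum_NJ (Q : A × A → ℝ) (hQ : IsPMF Q) (b0 : A) (n : ℕ) (b : A) :
    ∑ a, NJ Q b0 n (a, b) = NY (margY Q) b0 n b := by
  rw [← Finset.add_sum_erase univ _ (Finset.mem_univ b)]
  have h : ∑ a ∈ univ.erase b, NJ Q b0 n (a, b) = ∑ a ∈ univ.erase b, ⌊(n : ℝ) * Q (a, b)⌋₊ := by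
    refine Finset.sum_congr rfl fun a ha => ?_
    unfold NJ
    rw [if_neg (Finset.ne_of_mem_erase ha)]
  rw [h]
  have := NJ_aux Q hQ b0 n b
  simp only [NJ, if_true]
  omega

lemma tendsto_NJ (Q : A × A → ℝ) (hQ : IsPMF Q) (b0 : A) (q : A × A) :
    Tendsto (fun n : ℕ => (NJ Q b0 n q : ℝ) / n) atTop (nhds (Q q)) := by
  obtain ⟨a, b⟩ := q
  by_cases hab : a = b
  · subst hab
    have h := (tendsto_NY (margY Q) (isPMF_margY Q hQ) b0 a).sub
      (tendsto_finsetSum (univ.erase a) fun a' _ => tendsto_floor (Q (a', a)) (hQ.1 _))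
    have e : margY Q a - ∑ a' ∈ univ.erase a, Q (a', a) = Q (a, a) := by
      unfold margY
      rw [← Finset.add_sum_erase univ _ (Finset.mem_univ a)]; ring
    rw [e] at h
    refine h.congr fun n => ?_
    simp only [NJ, if_true]
    rw [Nat.cast_sub (NJ_aux Q hQ b0 n a), ← Finset.sum_div]
    push_cast
    ring
  · refine (tendsto_floor (Q (a, b)) (hQ.1 _)).congr fun n => ?_
    simp only [NJ, if_neg hab]

lemma exists_rounding (d : A → A → ℝ) (hd : ∀ a b, 0 ≤ d a b) (hdrefl : ∀ a, d a a = 0)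
    (Q : A × A → ℝ) (hQ : IsPMF Q) (Δ : ℝ) (hΔ : expDist d Q ≤ Δ) (b0 : A) :
    ∃ x y : ∀ n : ℕ, Fin n → A, (∀ n, cnt (y n) = NY (margY Q) b0 n) ∧
      (∀ n, dSeq d (x n) (y n) ≤ n * Δ) ∧
      ∀ a, Tendsto (fun n => empP (x n) a) atTop (nhds (margX Q a)) := by
  have hz : ∀ n : ℕ, ∃ z : Fin n → A × A, cnt z = NJ Q b0 n := fun n => by
    refine exists_seq_of_counts _ ?_
    rw [Fintype.sum_prod_type_right]
    simp_rw [sum_NJ Q hQ b0 n]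
    exact sum_NY _ (isPMF_margY Q hQ) b0 n
  choose z hz using hz
  refine ⟨fun n i => (z n i).1, fun n i => (z n i).2, ?_, ?_, ?_⟩
  · intro n
    ext b
    rw [cnt_snd, hz, sum_NJ Q hQ]
  · intro n
    unfold dSeq
    rw [sum_pos_eq (z n) (fun q => d q.1 q.2), hz]
    refine le_trans ?_ (mul_le_mul_of_nonneg_left hΔ (Nat.cast_nonneg n))
    unfold expDist
    rw [Finset.mul_sum]
    refine Finset.sum_le_sum fun q _ => ?_
    by_cases hq : q.1 = q.2
    · rw [hq, hdrefl]; simp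
    · rw [← mul_assoc]
      refine mul_le_mul_of_nonneg_right ?_ (hd _ _)
      simp only [NJ, if_neg hq]
      exact Nat.floor_le (mul_nonneg (Nat.cast_nonneg n) (hQ.1 _))
  · intro a
    have h : Tendsto (fun n : ℕ => ∑ b, (NJ Q b0 n (a, b) : ℝ) / n) atTop (nhds (margX Q a)) :=
      tendsto_finsetSum _ fun b _ => tendsto_NJ Q hQ b0 (a, b)
    refine h.congr fun n => ?_
    rw [empP_eq, cnt_fst, hz, ← Finset.sum_div]
    push_cast
    rfl

/-- diagonal coupling -/
def diagQ (P : A → ℝ) : A × A → ℝ := fun q => if q.1 = q.2 then P q.1 else 0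

lemma margX_diagQ (P : A → ℝ) : margX (diagQ P) = P := by
  ext a; simp [margX, diagQ]

lemma margY_diagQ (P : A → ℝ) : margY (diagQ P) = P := by
  ext a; simp [margY, diagQ]

lemma isPMF_diagQ (P : A → ℝ) (hP : IsPMF P) : IsPMF (diagQ P) := by
  refine ⟨fun q => ?_, ?_⟩
  · unfold diagQ; split_ifs
    · exact hP.1 _
    · exact le_rfl
  · rw [Fintype.sum_prod_type, ← hP.2]
    exact Finset.sum_congr rfl fun a _ => congrFun (margX_diagQ P) a

lemma expDist_diagQ (d : A → A → ℝ) (hdrefl : ∀ a, d a a = 0) (P : A → ℝ) :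
    expDist d (diagQ P) = 0 := by
  refine Finset.sum_eq_zero fun q _ => ?_
  unfold diagQ
  split_ifs with h
  · rw [h, hdrefl, mul_zero]
  · simp

lemma Dtilde_set_nonempty (d : A → A → ℝ) (hdrefl : ∀ a, d a a = 0) (Δ : ℝ) (hΔ : 0 ≤ Δ)
    (PY P : A → ℝ) (hPY : IsPMF PY) : {v | ∃ Q : A × A → ℝ,
    IsPMF Q ∧ margY Q = PY ∧ expDist d Q ≤ Δ ∧ v = klDiv (margX Q) P}.Nonempty :=
  ⟨_, diagQ PY, isPMF_diagQ PY hPY, margY_diagQ PY, by rw [expDist_diagQ d hdrefl]; exact hΔ, rfl⟩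

/-- mixture with the diagonal coupling -/
def mixQ (t : ℝ) (Q : A × A → ℝ) (P : A → ℝ) : A × A → ℝ :=
  fun q => (1 - t) * Q q + t * diagQ P q

lemma margX_mixQ (t : ℝ) (Q : A × A → ℝ) (P : A → ℝ) :
    margX (mixQ t Q P) = fun a => (1 - t) * margX Q a + t * P a := by
  ext a
  rw [← congrFun (margX_diagQ P) a]
  simp only [margX, mixQ]
  rw [Finset.sum_add_distrib, Finset.mul_sum, Finset.mul_sum]

lemma margY_mixQ (t : ℝ) (Q : A × A → ℝ) (P : A → ℝ) :
    margY (mixQ t Q P) = fun a => (1 - t) * margY Q a + t * P a := by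
  ext a
  rw [← congrFun (margY_diagQ P) a]
  simp only [margY, mixQ]
  rw [Finset.sum_add_distrib, Finset.mul_sum, Finset.mul_sum]

lemma isPMF_mixQ (t : ℝ) (h0 : 0 ≤ t) (h1 : t ≤ 1) (Q : A × A → ℝ) (hQ : IsPMF Q) (P : A → ℝ)
    (hP : IsPMF P) : IsPMF (mixQ t Q P) := by
  have hD := isPMF_diagQ P hP
  refine ⟨fun q => add_nonneg (mul_nonneg (by linarith) (hQ.1 q)) (mul_nonneg h0 (hD.1 q)), ?_⟩
  simp only [mixQ]
  rw [Finset.sum_add_distrib, ← Finset.mul_sum, ← Finset.mul_sum, hQ.2, hD.2]; ring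

lemma expDist_mixQ (d : A → A → ℝ) (hdrefl : ∀ a, d a a = 0) (t : ℝ) (h0 : 0 ≤ t) (h1 : t ≤ 1)
    (Q : A × A → ℝ) (P : A → ℝ) (Δ : ℝ) (hΔ : 0 ≤ Δ) (h : expDist d Q ≤ Δ) :
    expDist d (mixQ t Q P) ≤ Δ := by
  have e : expDist d (mixQ t Q P) = (1 - t) * expDist d Q + t * expDist d (diagQ P) := by
    simp only [expDist, mixQ]
    rw [Finset.mul_sum, Finset.mul_sum, ← Finset.sum_add_distrib]
    exact Finset.sum_congr rfl fun q _ => by ring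
  rw [e, expDist_diagQ d hdrefl, mul_zero, add_zero]
  nlinarith

lemma lower_main [Nonempty A] (d : A → A → ℝ) (hd : ∀ a b, 0 ≤ d a b) (hdrefl : ∀ a, d a a = 0)
    (P0 P1 : A → ℝ) (hP0 : IsPMF P0) (hP1 : IsPMF P1)
    (hP0pos : ∀ a, 0 < P0 a) (hP1pos : ∀ a, 0 < P1 a)
    (Δ0 Δ1 lam : ℝ) (hΔ0 : 0 ≤ Δ0) (hΔ1 : 0 ≤ Δ1) (hlam : 0 < lam)
    (c : ℝ) (hc : expo d P0 P1 Δ0 Δ1 lam < c) :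
    ∃ (D : ℕ → ℝ) (D1 : ℝ), D1 < c ∧ Tendsto D atTop (nhds D1) ∧ ∀ᶠ n : ℕ in atTop,
      (1 / 2) * (((n : ℝ) + 1) ^ Fintype.card (A × A))⁻¹ *
        (((Real.exp 1 * (n + 1)) ^ Fintype.card A)⁻¹ * Real.exp (-(n * D n))) ≤
      PFN P1 (rule d P0 Δ0 lam n) (Astar (dSeq d) Δ1) := by
  have hXnn : ∀ Q : A × A → ℝ, IsPMF Q → ∀ a, 0 ≤ margX Q a :=
    fun Q hQ a => Finset.sum_nonneg fun b _ => hQ.1 _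
  have hne : {v | ∃ PY : A → ℝ, IsPMF PY ∧ Dtilde d Δ0 PY P0 ≤ lam ∧
      v = Dtilde d Δ1 PY P1}.Nonempty := by
    refine ⟨_, P0, hP0, ?_, rfl⟩
    refine (csInf_le ⟨0, fun v hv => Dtilde_bdd d Δ0 _ P0 hP0 hP0pos v hv⟩
      ⟨diagQ P0, isPMF_diagQ P0 hP0, margY_diagQ P0, ?_, rfl⟩).trans ?_
    · rw [expDist_diagQ d hdrefl]; exact hΔ0
    · rw [margX_diagQ, klDiv_self' P0 hP0pos]; exact hlam.le
  obtain ⟨v, ⟨PY, hPY, hY0, rfl⟩, hv⟩ := exists_lt_of_csInf_lt hne hc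
  obtain ⟨v1, ⟨Q1, hQ1, hQ1Y, hQ1d, rfl⟩, hv1⟩ :=
    exists_lt_of_csInf_lt (Dtilde_set_nonempty d hdrefl Δ1 hΔ1 PY P1 hPY) hv
  -- choose the mixing weight
  obtain ⟨t, ht0, ht1, htc⟩ : ∃ t : ℝ, 0 < t ∧ t ≤ 1 ∧
      (1 - t) * klDiv (margX Q1) P1 + t * klDiv P0 P1 < c := by
    have hcont : Tendsto (fun t : ℝ => (1 - t) * klDiv (margX Q1) P1 + t * klDiv P0 P1)
        (nhds 0) (nhds ((1 - 0) * klDiv (margX Q1) P1 + 0 * klDiv P0 P1)) :=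
      Continuous.tendsto (by fun_prop) 0
    have hev := hcont.eventually_lt_const (by simpa using hv1 :
      (1 - 0) * klDiv (margX Q1) P1 + 0 * klDiv P0 P1 < c)
    have hev' := (hev.filter_mono (nhdsWithin_le_nhds (s := Set.Ioi 0))).and
      (Ioc_mem_nhdsGT (zero_lt_one (α := ℝ)))
    obtain ⟨t, h1, h2⟩ := hev'.exists
    exact ⟨t, h2.1, h2.2, h1⟩
  have hlt : Dtilde d Δ0 PY P0 < (1 + t) * lam := by nlinarith
  obtain ⟨v0, ⟨Q0, hQ0, hQ0Y, hQ0d, rfl⟩, hv0⟩ :=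
    exists_lt_of_csInf_lt (Dtilde_set_nonempty d hdrefl Δ0 hΔ0 PY P0 hPY) hlt
  have hR0 := isPMF_mixQ t ht0.le ht1 Q0 hQ0 P0 hP0
  have hR1 := isPMF_mixQ t ht0.le ht1 Q1 hQ1 P0 hP0
  have b0 : A := Classical.arbitrary A
  obtain ⟨x0, y0, hy0, hd0, hlim0⟩ := exists_rounding d hd hdrefl _ hR0 Δ0
    (expDist_mixQ d hdrefl t ht0.le ht1 Q0 P0 Δ0 hΔ0 hQ0d) b0
  obtain ⟨x1, y1, hy1, hd1, hlim1⟩ := exists_rounding d hd hdrefl _ hR1 Δ1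
    (expDist_mixQ d hdrefl t ht0.le ht1 Q1 P0 Δ1 hΔ1 hQ1d) b0
  have hyy : ∀ n, cnt (y1 n) = cnt (y0 n) := fun n => by
    rw [hy0, hy1, margY_mixQ, margY_mixQ, hQ0Y, hQ1Y]
  have hempnn : ∀ n (x : Fin n → A) a, 0 ≤ empP x a := fun n x a => by
    unfold empP; positivity
  have hk0 : klDiv (margX (mixQ t Q0 P0)) P0 < lam := by
    rw [margX_mixQ]
    refine (klDiv_mix _ _ _ (hXnn Q0 hQ0) hP0.1 hP0pos t ht0.le ht1).trans_lt ?_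
    rw [klDiv_self' P0 hP0pos, mul_zero, add_zero]
    have h1 : (1 - t) * klDiv (margX Q0) P0 ≤ (1 - t) * ((1 + t) * lam) :=
      mul_le_mul_of_nonneg_left hv0.le (by linarith)
    have h2 : 0 < t * t * lam := by positivity
    nlinarith
  have hk1 : klDiv (margX (mixQ t Q1 P0)) P1 < c := by
    rw [margX_mixQ]
    exact (klDiv_mix _ _ _ (hXnn Q1 hQ1) hP0.1 hP1pos t ht0.le ht1).trans_lt htc
  have hl0 := klDiv_tendsto (fun n => empP (x0 n)) _ P0 (fun n a => hempnn n _ a) hP0pos hlim0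
  have hl1 := klDiv_tendsto (fun n => empP (x1 n)) _ P1 (fun n a => hempnn n _ a) hP1pos hlim1
  refine ⟨fun n => klDiv (empP (x1 n)) P1, _, hk1, hl1, ?_⟩
  set m := klDiv (margX (mixQ t Q0 P0)) P0
  have hδ : 0 < (lam - m) / 2 := by linarith
  have hbig : ∀ᶠ n : ℕ in atTop, 1 ≤ (n : ℝ) * ((lam - m) / 2) :=
    (tendsto_natCast_atTop_atTop.atTop_mul_const hδ).eventually_ge_atTop 1
  filter_upwards [eventually_gt_atTop 0, hbig,
    hl0.eventually_lt_const (show m < lam - (lam - m) / 2 by linarith)] with n hn hn1 hn2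
  exact PFN_ge d P0 P1 hP0 hP1 hP0pos hP1pos Δ0 Δ1 lam ((lam - m) / 2) hn hn1
    (x0 n) (y0 n) (x1 n) (y1 n) (hyy n) (hd0 n) (hd1 n) hn2.le

lemma log_ratio_tendsto : Tendsto (fun n : ℕ => Real.log ((n : ℝ) + 1) / n) atTop (nhds 0) := by
  have h1 : Tendsto (fun n : ℕ => Real.log (n : ℝ) / n) atTop (nhds 0) :=
    (Real.isLittleO_log_id_atTop.tendsto_div_nhds_zero).comp tendsto_natCast_atTop_atTop
  have h2 : Tendsto (fun n : ℕ => Real.log 2 / (n : ℝ)) atTop (nhds 0) :=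
    tendsto_const_nhds.div_atTop tendsto_natCast_atTop_atTop
  have h3 := h2.add h1
  rw [add_zero] at h3
  refine tendsto_of_tendsto_of_tendsto_of_le_of_le' tendsto_const_nhds h3 ?_ ?_
  · filter_upwards with n
    exact div_nonneg (Real.log_nonneg (by linarith [Nat.cast_nonneg (α := ℝ) n])) (by positivity)
  · filter_upwards [eventually_gt_atTop 0] with n hn
    have hn' : (0 : ℝ) < n := by positivity
    have hn1 : (1 : ℝ) ≤ n := by exact_mod_cast hn
    rw [← add_div, ← Real.log_mul (by norm_num) hn'.ne']
    gcongr
    linarith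

lemma final_aux [Nonempty A] (d : A → A → ℝ) (hd : ∀ a b, 0 ≤ d a b) (hdrefl : ∀ a, d a a = 0)
    (P0 P1 : A → ℝ) (hP0 : IsPMF P0) (hP1 : IsPMF P1)
    (hP0pos : ∀ a, 0 < P0 a) (hP1pos : ∀ a, 0 < P1 a)
    (Δ0 Δ1 lam : ℝ) (hΔ0 : 0 ≤ Δ0) (hΔ1 : 0 ≤ Δ1) (hlam : 0 < lam) :
    (∀ᶠ n : ℕ in atTop, 0 < PFN P1 (rule d P0 Δ0 lam n) (Astar (dSeq d) Δ1)) ∧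
    Tendsto (fun n : ℕ => -(1 / (n : ℝ)) * Real.log
      (PFN P1 (rule d P0 Δ0 lam n) (Astar (dSeq d) Δ1))) atTop
      (nhds (expo d P0 P1 Δ0 Δ1 lam)) := by
  set E := expo d P0 P1 Δ0 Δ1 lam with hE
  have hlow := lower_main d hd hdrefl P0 P1 hP0 hP1 hP0pos hP1pos Δ0 Δ1 lam hΔ0 hΔ1 hlam
  have hpos : ∀ᶠ n : ℕ in atTop, 0 < PFN P1 (rule d P0 Δ0 lam n) (Astar (dSeq d) Δ1) := by
    obtain ⟨D, D1, -, -, h⟩ := hlow (E + 1) (by linarith)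
    filter_upwards [h] with n hn
    exact lt_of_lt_of_le (by positivity) hn
  refine ⟨hpos, tendsto_order.2 ⟨fun c hc => ?_, fun c hc => ?_⟩⟩
  · have hlim : Tendsto (fun n : ℕ => E - Fintype.card A * (Real.log ((n : ℝ) + 1) / n)) atTop
        (nhds (E - Fintype.card A * 0)) :=
      tendsto_const_nhds.sub (log_ratio_tendsto.const_mul _)
    rw [mul_zero, sub_zero] at hlim
    filter_upwards [hpos, eventually_gt_atTop 0, hlim.eventually_const_lt hc] with n hp hn hlt
    refine hlt.trans_le ?_
    have hn' : (0 : ℝ) < n := by positivity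
    have h := PFN_le d hdrefl P0 P1 hP0 hP1 hP0pos hP1pos Δ0 Δ1 lam hΔ0 hn
    have h2 := Real.log_le_log hp h
    rw [Real.log_mul (by positivity) (Real.exp_pos _).ne', Real.log_exp, Real.log_pow] at h2
    have h3 := mul_le_mul_of_nonneg_left h2 (show 0 ≤ 1 / (n : ℝ) by positivity)
    have e : 1 / (n : ℝ) * (Fintype.card A * Real.log ((n : ℝ) + 1) +
        -(n * expo d P0 P1 Δ0 Δ1 lam)) =
        Fintype.card A * (Real.log ((n : ℝ) + 1) / n) - E := by
      rw [← hE]; field_simp; ring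
    rw [e] at h3
    linarith
  · obtain ⟨D, D1, hD1, hD, h⟩ := hlow c hc
    have hinv : Tendsto (fun n : ℕ => 1 / (n : ℝ)) atTop (nhds 0) := tendsto_one_div_atTop_nhds_zero_nat
    have hlim : Tendsto (fun n : ℕ => D n + (Real.log 2 + Fintype.card A) * (1 / (n : ℝ)) +
        (Fintype.card (A × A) + Fintype.card A) * (Real.log ((n : ℝ) + 1) / n)) atTop
        (nhds (D1 + (Real.log 2 + Fintype.card A) * 0 +
          (Fintype.card (A × A) + Fintype.card A) * 0)) :=
      (hD.add (hinv.const_mul _)).add (log_ratio_tendsto.const_mul _)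
    rw [mul_zero, mul_zero, add_zero, add_zero] at hlim
    filter_upwards [h, eventually_gt_atTop 0, hlim.eventually_lt_const hD1] with n hn1 hn hlt
    refine lt_of_le_of_lt ?_ hlt
    have hn' : (0 : ℝ) < n := by positivity
    have h2 := Real.log_le_log (by positivity) hn1
    rw [Real.log_mul (by positivity) (by positivity), Real.log_mul (by positivity) (by positivity),
      Real.log_mul (by positivity) (by positivity), Real.log_exp, Real.log_inv, Real.log_inv,
      Real.log_pow, Real.log_pow, Real.log_mul (by positivity) (by positivity), Real.log_exp,
      one_div, Real.log_inv] at h2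
    have h3 := mul_le_mul_of_nonneg_left h2 (show 0 ≤ 1 / (n : ℝ) by positivity)
    have e : 1 / (n : ℝ) * (-Real.log 2 + -(Fintype.card (A × A) * Real.log ((n : ℝ) + 1)) +
        (-(Fintype.card A * (1 + Real.log ((n : ℝ) + 1))) + -(n * D n))) =
        -(D n + (Real.log 2 + Fintype.card A) * (1 / (n : ℝ)) +
        (Fintype.card (A × A) + Fintype.card A) * (Real.log ((n : ℝ) + 1) / n)) := by
      field_simp; ring
    rw [e] at h3
    linarith

end helpers

/-- Theorem 3: false-negative exponent of the Neyman–Pearson game at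
equilibrium. -/
theorem np_fn_exponent
    {A : Type} [Fintype A] [DecidableEq A] [Nonempty A]
    (d : A → A → ℝ) (hd : ∀ a b, 0 ≤ d a b) (hdrefl : ∀ a, d a a = 0)
    (P0 P1 : A → ℝ) (hP0 : IsPMF P0) (hP1 : IsPMF P1)
    (hP0pos : ∀ a, 0 < P0 a) (hP1pos : ∀ a, 0 < P1 a)
    (Δ0 Δ1 lam : ℝ) (hΔ0 : 0 ≤ Δ0) (hΔ1 : 0 ≤ Δ1) (hlam : 0 < lam) :
    (∀ᶠ n : ℕ in atTop,
      0 < PFN P1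
            (fun y : Fin n → A =>
              Real.exp (-(n : ℝ) * max (lam - DtildeN d Δ0 y P0) 0))
            (Astar (dSeq d) Δ1)) ∧
    Tendsto
      (fun n : ℕ =>
        -(1 / (n : ℝ)) * Real.log
          (PFN P1
            (fun y : Fin n → A =>
              Real.exp (-(n : ℝ) * max (lam - DtildeN d Δ0 y P0) 0))
            (Astar (dSeq d) Δ1)))
      atTop
      (nhds (sInf {v | ∃ PY : A → ℝ,
        IsPMF PY ∧ Dtilde d Δ0 PY P0 ≤ lam ∧ v = Dtilde d Δ1 PY P1})) := by
  exact final_aux d hd hdrefl P0 P1 hP0 hP1 hP0pos hP1pos Δ0 Δ1 lam hΔ0 hΔ1 hlam
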